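/- Let μ1, μ2 ∈ P_2(ℝ^d) and θ ∈ S^{d−1}. Then: (i) PS_θ(μ1, μ2) = 0 if and only if μ1 = μ2; (ii) PS_θ(μ1, μ2) = PS_θ(μ2, μ1); (iii) PS_θ(μ1, μ2) ≥ W_2(μ1, μ2). -/

import Mathlib

open MeasureTheory Filter Topology ProbabilityTheory
open scoped ENNReal RealInnerProductSpace Classical

noncomputable section

/-- Euclidean space ℝ^d. -/
abbrev Euc (d : ℕ) : Type := EuclideanSpace ℝ (Fin d)

/-- `P2` : Borel probability measures with finite second moment. -/
def P2 {E : Type*} [NormedAddCommGroup E] [MeasurableSpace E] : Set (Measure E) :=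
  {μ | IsProbabilityMeasure μ ∧ Integrable (fun x => ‖x‖ ^ 2) μ}

/-- Couplings between two measures. -/
def Coupling {E F : Type*} [MeasurableSpace E] [MeasurableSpace F]
    (μ : Measure E) (ν : Measure F) : Set (Measure (E × F)) :=
  {π | IsProbabilityMeasure π ∧ π.map Prod.fst = μ ∧ π.map Prod.snd = ν}

/-- Quadratic transport cost of a plan. -/
def tCost {E : Type*} [NormedAddCommGroup E] [MeasurableSpace E]
    (π : Measure (E × E)) : ℝ :=
  ∫ p, ‖p.1 - p.2‖ ^ 2 ∂π

/-- Squared 2-Wasserstein distance. -/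
def W2sq {E : Type*} [NormedAddCommGroup E] [MeasurableSpace E] (μ ν : Measure E) : ℝ :=
  sInf (tCost '' Coupling μ ν)

/-- 2-Wasserstein distance. -/
def W2 {E : Type*} [NormedAddCommGroup E] [MeasurableSpace E] (μ ν : Measure E) : ℝ :=
  Real.sqrt (W2sq μ ν)

/-- Optimal transport plans for the quadratic cost. -/
def OptPlan {E : Type*} [NormedAddCommGroup E] [MeasurableSpace E]
    (μ ν : Measure E) : Set (Measure (E × E)) :=
  {π | π ∈ Coupling μ ν ∧ tCost π = W2sq μ ν}

/-- `Gamma ν μ1 μ2` : probability measures on `E × E × E` whose (1,2)-marginal is an optimal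
plan between `ν` and `μ1` and whose (1,3)-marginal is an optimal plan between `ν` and `μ2`. -/
def Gamma {E : Type*} [NormedAddCommGroup E] [MeasurableSpace E]
    (ν μ1 μ2 : Measure E) : Set (Measure (E × E × E)) :=
  {ρ | IsProbabilityMeasure ρ ∧
    ρ.map (fun p => (p.1, p.2.1)) ∈ OptPlan ν μ1 ∧
    ρ.map (fun p => (p.1, p.2.2)) ∈ OptPlan ν μ2}

/-- Cost `∫ ‖x1 − x2‖² dρ(y, x1, x2)` of a 3-plan. -/
def pivotCost {E : Type*} [NormedAddCommGroup E] [MeasurableSpace E]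
    (ρ : Measure (E × E × E)) : ℝ :=
  ∫ p, ‖p.2.1 - p.2.2‖ ^ 2 ∂ρ

/-- Squared ν-based Wasserstein discrepancy. -/
def Wnusq {E : Type*} [NormedAddCommGroup E] [MeasurableSpace E]
    (ν μ1 μ2 : Measure E) : ℝ :=
  sInf (pivotCost '' Gamma ν μ1 μ2)

/-- ν-based Wasserstein discrepancy. -/
def Wnu {E : Type*} [NormedAddCommGroup E] [MeasurableSpace E]
    (ν μ1 μ2 : Measure E) : ℝ :=
  Real.sqrt (Wnusq ν μ1 μ2)

/-- Weak convergence of a sequence of measures (against bounded continuous functions). -/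
def WeakConv {E : Type*} [MeasurableSpace E] [TopologicalSpace E]
    (μs : ℕ → Measure E) (μ : Measure E) : Prop :=
  ∀ f : BoundedContinuousFunction E ℝ,
    Tendsto (fun n => ∫ x, f x ∂(μs n)) atTop (𝓝 (∫ x, f x ∂μ))

/-- Quantile function (pseudo-inverse c.d.f.) of a measure on ℝ. -/
def quantile (ν : Measure ℝ) (t : ℝ) : ℝ :=
  sInf {s : ℝ | ENNReal.ofReal t ≤ ν (Set.Iic s)}

/-- Pushforward of `μ` by the projection `P_θ : x ↦ ⟪θ, x⟫`. -/
def projLine {d : ℕ} (θ : Euc d) (μ : Measure (Euc d)) : Measure ℝ :=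
  μ.map (fun x => ⟪θ, x⟫)

/-- `μ_θ[μ1, μ2]` : the (unique) Wasserstein mean of `Q_θ#μ1` and `Q_θ#μ2`, given by the
explicit quantile formula `[(½ F_{ν1}^{[-1]} + ½ F_{ν2}^{[-1]})·θ]#L_{[0,1]}`. -/
def pivotMiddle {d : ℕ} (θ : Euc d) (μ1 μ2 : Measure (Euc d)) : Measure (Euc d) :=
  (volume.restrict (Set.Icc (0 : ℝ) 1)).map
    (fun t => ((1 / 2) * quantile (projLine θ μ1) t
      + (1 / 2) * quantile (projLine θ μ2) t) • θ)

/-- Squared Pivot Sliced discrepancy. -/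
def PSsq {d : ℕ} (θ : Euc d) (μ1 μ2 : Measure (Euc d)) : ℝ :=
  Wnusq (pivotMiddle θ μ1 μ2) μ1 μ2

/-- Pivot Sliced discrepancy. -/
def PS {d : ℕ} (θ : Euc d) (μ1 μ2 : Measure (Euc d)) : ℝ :=
  Real.sqrt (PSsq θ μ1 μ2)

/-- `π_θ[μ1, μ2]` : the unique optimal 1D plan between `P_θ#μ1` and `P_θ#μ2`
(co-monotone quantile coupling). -/
def piTheta {d : ℕ} (θ : Euc d) (μ1 μ2 : Measure (Euc d)) : Measure (ℝ × ℝ) :=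
  (volume.restrict (Set.Icc (0 : ℝ) 1)).map
    (fun t => (quantile (projLine θ μ1) t, quantile (projLine θ μ2) t))

/-- `Ω_θ(μ1, μ2)` : couplings of `μ1, μ2` whose projection by `(P_θ, P_θ)` is `π_θ[μ1, μ2]`. -/
def OmegaTheta {d : ℕ} (θ : Euc d) (μ1 μ2 : Measure (Euc d)) :
    Set (Measure (Euc d × Euc d)) :=
  {ω | ω ∈ Coupling μ1 μ2 ∧
    ω.map (fun p => (⟪θ, p.1⟫, ⟪θ, p.2⟫)) = piTheta θ μ1 μ2}

/-- Squared constrained Wasserstein discrepancy `CW_θ²`. -/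
def CWsq {d : ℕ} (θ : Euc d) (μ1 μ2 : Measure (Euc d)) : ℝ :=
  sInf (tCost '' OmegaTheta θ μ1 μ2)

/-- Wasserstein means: minimisers of `μ ↦ W₂²(μ1, μ) + W₂²(μ, μ2)` over `P2`. -/
def WMean {d : ℕ} (μ1 μ2 : Measure (Euc d)) : Set (Measure (Euc d)) :=
  {μ | μ ∈ (P2 : Set (Measure (Euc d))) ∧
    ∀ μ' ∈ (P2 : Set (Measure (Euc d))),
      W2sq μ1 μ + W2sq μ μ2 ≤ W2sq μ1 μ' + W2sq μ' μ2}

/-- Uniform empirical measure `1/n ∑ δ_{x_i}`. -/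
def empMeasure {d n : ℕ} (x : Fin n → Euc d) : Measure (Euc d) :=
  (n : ℝ≥0∞)⁻¹ • ∑ i, Measure.dirac (x i)

lemma P2_iff_memLp {d : ℕ} (μ : Measure (Euc d)) :
    μ ∈ (P2 : Set (Measure (Euc d))) ↔ IsProbabilityMeasure μ ∧ MemLp (fun x => x) 2 μ := by
  unfold P2
  simp only [Set.mem_ofPred_eq]
  rw [memLp_two_iff_integrable_sq_norm]
  exact measurable_id'.aestronglyMeasurable

lemma quantile_le_iff (ν : Measure ℝ) [IsProbabilityMeasure ν] {t : ℝ}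
    (ht : t ∈ Set.Ioo (0 : ℝ) 1) (s : ℝ) : quantile ν t ≤ s ↔ t ≤ cdf ν s := by
  have hset : {s : ℝ | ENNReal.ofReal t ≤ ν (Set.Iic s)} = {s : ℝ | t ≤ cdf ν s} := by
    ext s
    simp only [Set.mem_ofPred_eq]
    rw [← ofReal_cdf, ENNReal.ofReal_le_ofReal_iff (cdf_nonneg ν s)]
  unfold quantile
  rw [hset]
  have hne : {s : ℝ | t ≤ cdf ν s}.Nonempty := by
    obtain ⟨x, hx⟩ := ((tendsto_cdf_atTop ν).eventually (eventually_gt_nhds ht.2)).exists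
    exact ⟨x, hx.le⟩
  have hbdd : BddBelow {s : ℝ | t ≤ cdf ν s} := by
    obtain ⟨x, hx⟩ := ((tendsto_cdf_atBot ν).eventually (eventually_lt_nhds ht.1)).exists
    refine ⟨x, fun y hy => ?_⟩
    by_contra! h
    have := monotone_cdf ν h.le
    simp only [Set.mem_ofPred_eq] at hy
    linarith
  constructor
  · intro h
    have hc : Tendsto (cdf ν) (𝓝[>] s) (𝓝 (cdf ν s)) :=
      ((cdf ν).right_continuous s).tendsto.mono_left (nhdsWithin_mono _ Set.Ioi_subset_Ici_self)
    refine ge_of_tendsto hc ?_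
    filter_upwards [self_mem_nhdsWithin] with s' hs'
    obtain ⟨u, hu, hu'⟩ := exists_lt_of_csInf_lt hne (lt_of_le_of_lt h hs')
    exact le_trans hu (monotone_cdf ν hu'.le)
  · intro h
    exact csInf_le hbdd h

lemma restrict_Icc_eq : (volume : Measure ℝ).restrict (Set.Icc (0 : ℝ) 1)
    = volume.restrict (Set.Ioo (0 : ℝ) 1) :=
  Measure.restrict_congr_set Ioo_ae_eq_Icc.symm

lemma quantile_aemeasurable (ν : Measure ℝ) [IsProbabilityMeasure ν] :
    AEMeasurable (quantile ν) (volume.restrict (Set.Icc (0 : ℝ) 1)) := by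
  rw [restrict_Icc_eq]
  apply aemeasurable_restrict_of_monotoneOn measurableSet_Ioo
  intro a ha b hb hab
  rw [quantile_le_iff ν ha]
  exact hab.trans ((quantile_le_iff ν hb _).1 le_rfl)

lemma isProb_Icc : IsProbabilityMeasure ((volume : Measure ℝ).restrict (Set.Icc (0 : ℝ) 1)) :=
  ⟨by simp⟩

lemma quantile_map (ν : Measure ℝ) [IsProbabilityMeasure ν] :
    (volume.restrict (Set.Icc (0 : ℝ) 1)).map (quantile ν) = ν := by
  have := isProb_Icc
  have hm := quantile_aemeasurable ν
  have := Measure.isProbabilityMeasure_map hm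
  apply Measure.ext_of_Iic
  intro s
  rw [Measure.map_apply_of_aemeasurable hm measurableSet_Iic, restrict_Icc_eq,
    Measure.restrict_apply' measurableSet_Ioo]
  have : quantile ν ⁻¹' Set.Iic s ∩ Set.Ioo 0 1 = Set.Ioo 0 1 ∩ Set.Iic (cdf ν s) := by
    ext t
    simp only [Set.mem_inter_iff, Set.mem_preimage, Set.mem_Iic]
    constructor
    · rintro ⟨h, ht⟩
      exact ⟨ht, (quantile_le_iff ν ht s).1 h⟩
    · rintro ⟨ht, h⟩
      exact ⟨(quantile_le_iff ν ht s).2 h, ht⟩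
  have h2 : (Set.Ioo (0 : ℝ) 1 ∩ Set.Iic (cdf ν s) : Set ℝ) =ᵐ[volume]
      (Set.Ioc (0 : ℝ) 1 ∩ Set.Iic (cdf ν s) : Set ℝ) :=
    ae_eq_set_inter Ioo_ae_eq_Ioc (ae_eq_refl _)
  rw [this, measure_congr h2, Set.Ioc_inter_Iic,
    Real.volume_Ioc, ← ofReal_cdf, min_eq_right (cdf_le_one ν s), sub_zero]

lemma quantile_memLp (ν : Measure ℝ) [IsProbabilityMeasure ν] (h : MemLp (fun x => x) 2 ν) :
    MemLp (quantile ν) 2 (volume.restrict (Set.Icc (0 : ℝ) 1)) := by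
  have hm := quantile_aemeasurable ν
  rw [← quantile_map ν, memLp_map_measure_iff measurable_id'.aestronglyMeasurable hm] at h
  exact h

lemma projLine_memLp {d : ℕ} (θ : Euc d) (μ : Measure (Euc d)) (h : MemLp (fun x => x) 2 μ) :
    MemLp (fun x => x) 2 (projLine θ μ) := by
  unfold projLine
  rw [memLp_map_measure_iff measurable_id'.aestronglyMeasurable (by fun_prop)]
  exact h.const_inner θ

lemma pivotMiddle_mem {d : ℕ} (θ : Euc d) (μ1 μ2 : Measure (Euc d))
    (h1 : μ1 ∈ (P2 : Set (Measure (Euc d)))) (h2 : μ2 ∈ (P2 : Set (Measure (Euc d)))) :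
    pivotMiddle θ μ1 μ2 ∈ (P2 : Set (Measure (Euc d))) := by
  rw [P2_iff_memLp] at *
  obtain ⟨p1, m1⟩ := h1
  obtain ⟨p2, m2⟩ := h2
  have : IsProbabilityMeasure (projLine θ μ1) :=
    Measure.isProbabilityMeasure_map (by fun_prop)
  have : IsProbabilityMeasure (projLine θ μ2) :=
    Measure.isProbabilityMeasure_map (by fun_prop)
  have q1 := quantile_memLp _ (projLine_memLp θ μ1 m1)
  have q2 := quantile_memLp _ (projLine_memLp θ μ2 m2)
  have q : MemLp (fun t => ((1 / 2) * quantile (projLine θ μ1) t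
      + (1 / 2) * quantile (projLine θ μ2) t) • θ) 2 (volume.restrict (Set.Icc (0 : ℝ) 1)) := by
    have := (q1.const_mul (1/2)).add (q2.const_mul (1/2))
    have hl := (ContinuousLinearMap.toSpanSingleton ℝ θ).comp_memLp' this
    exact hl
  have := isProb_Icc
  have hm := q.aestronglyMeasurable.aemeasurable
  refine ⟨Measure.isProbabilityMeasure_map hm, ?_⟩
  unfold pivotMiddle
  rw [memLp_map_measure_iff measurable_id'.aestronglyMeasurable hm]
  exact q

def lCost {d : ℕ} (π : Measure (Euc d × Euc d)) : ℝ≥0∞ :=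
  ∫⁻ p, ENNReal.ofReal (‖p.1 - p.2‖ ^ 2) ∂π

lemma tCost_eq {d : ℕ} (π : Measure (Euc d × Euc d)) : tCost π = (lCost π).toReal := by
  unfold tCost lCost
  apply integral_eq_lintegral_of_nonneg_ae
  · exact Eventually.of_forall fun _ => by positivity
  · exact (by fun_prop : Measurable fun p : Euc d × Euc d => ‖p.1 - p.2‖ ^ 2).aestronglyMeasurable

lemma lCost_ne_top {d : ℕ} {μ ν : Measure (Euc d)}
    (hμ : μ ∈ (P2 : Set (Measure (Euc d)))) (hν : ν ∈ (P2 : Set (Measure (Euc d))))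
    {π : Measure (Euc d × Euc d)} (hπ : π ∈ Coupling μ ν) : lCost π ≠ ⊤ := by
  rw [P2_iff_memLp] at hμ hν
  obtain ⟨-, rfl, rfl⟩ := hπ
  have a := hμ.2
  have b := hν.2
  rw [memLp_map_measure_iff measurable_id'.aestronglyMeasurable (by fun_prop)] at a b
  have c := (memLp_two_iff_integrable_sq_norm (a.sub b).aestronglyMeasurable).1 (a.sub b)
  have := c.lintegral_lt_top
  exact this.ne

lemma lCost_lsc {d : ℕ} :
    LowerSemicontinuous (fun π : ProbabilityMeasure (Euc d × Euc d) => lCost (π : Measure (Euc d × Euc d))) := by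
  have hb : ∀ n : ℕ, ∃ f : BoundedContinuousFunction (Euc d × Euc d) NNReal,
      ∀ p, f p = min (Real.toNNReal (‖p.1 - p.2‖ ^ 2)) n := by
    intro n
    refine ⟨BoundedContinuousFunction.mkOfBound
      ⟨fun p => min (Real.toNNReal (‖p.1 - p.2‖ ^ 2)) n, by fun_prop⟩ n ?_, fun p => rfl⟩
    intro x y
    simp only [ContinuousMap.coe_mk, NNReal.dist_eq]
    rw [abs_le]
    have h1 : ((min (Real.toNNReal (‖x.1 - x.2‖ ^ 2)) n : NNReal) : ℝ) ≤ n := by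
      exact_mod_cast min_le_right _ _
    have h2 : ((min (Real.toNNReal (‖y.1 - y.2‖ ^ 2)) n : NNReal) : ℝ) ≤ n := by
      exact_mod_cast min_le_right _ _
    have h3 := (min (Real.toNNReal (‖x.1 - x.2‖ ^ 2)) n : NNReal).coe_nonneg
    have h4 := (min (Real.toNNReal (‖y.1 - y.2‖ ^ 2)) n : NNReal).coe_nonneg
    constructor <;> linarith
  choose f hf using hb
  have key : (fun π : ProbabilityMeasure (Euc d × Euc d) => lCost (π : Measure (Euc d × Euc d)))
      = fun π : ProbabilityMeasure (Euc d × Euc d) => ⨆ n, ∫⁻ p, (f n p : ℝ≥0∞) ∂(π : Measure (Euc d × Euc d)) := by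
    ext π
    rw [← lintegral_iSup]
    · unfold lCost
      congr 1
      ext p
      apply le_antisymm
      · obtain ⟨n, hn⟩ := exists_nat_ge (Real.toNNReal (‖p.1 - p.2‖ ^ 2))
        refine le_iSup_of_le n ?_
        rw [hf, min_eq_left hn]
        exact le_rfl
      · refine iSup_le fun n => ?_
        rw [hf]
        exact ENNReal.coe_le_coe.2 (min_le_left _ _)
    · intro n
      exact (f n).continuous.measurable.coe_nnreal_ennreal
    · intro n m hnm p
      simp only [hf]
      gcongr
  rw [key]
  apply lowerSemicontinuous_iSup
  intro n
  apply Continuous.lowerSemicontinuous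
  rw [continuous_iff_continuousAt]
  intro π
  exact (ProbabilityMeasure.tendsto_iff_forall_lintegral_tendsto.1 tendsto_id) (f n)

lemma exists_opt {d : ℕ} {μ ν : Measure (Euc d)}
    (hμ : μ ∈ (P2 : Set (Measure (Euc d)))) (hν : ν ∈ (P2 : Set (Measure (Euc d)))) :
    (OptPlan μ ν).Nonempty := by
  have := hμ.1
  have := hν.1
  let S : Set (ProbabilityMeasure (Euc d × Euc d)) :=
    {π | π.map (f := Prod.fst) (by fun_prop) = ⟨μ, hμ.1⟩ ∧
         π.map (f := Prod.snd) (by fun_prop) = ⟨ν, hν.1⟩}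
  have memS : ∀ π : ProbabilityMeasure (Euc d × Euc d),
      π ∈ S ↔ (π : Measure (Euc d × Euc d)) ∈ Coupling μ ν := by
    intro π
    constructor
    · rintro ⟨h1, h2⟩
      exact ⟨π.2, congrArg Subtype.val h1, congrArg Subtype.val h2⟩
    · rintro ⟨-, h1, h2⟩
      exact ⟨Subtype.ext h1, Subtype.ext h2⟩
  have hclosed : IsClosed S := by
    apply IsClosed.inter
    · exact isClosed_eq (ProbabilityMeasure.continuous_map continuous_fst) continuous_const
    · exact isClosed_eq (ProbabilityMeasure.continuous_map continuous_snd) continuous_const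
  have htight : IsTightMeasureSet {((π : ProbabilityMeasure (Euc d × Euc d)) :
      Measure (Euc d × Euc d)) | π ∈ S} := by
    apply IsTightMeasureSet.prodMk
    · refine (isTightMeasureSet_singleton (μ := μ)).subset ?_
      rintro _ ⟨_, ⟨π, hπ, rfl⟩, rfl⟩
      exact ((memS π).1 hπ).2.1
    · refine (isTightMeasureSet_singleton (μ := ν)).subset ?_
      rintro _ ⟨_, ⟨π, hπ, rfl⟩, rfl⟩
      exact ((memS π).1 hπ).2.2
  have hcomp : IsCompact S := by
    have := isCompact_closure_of_isTightMeasureSet htight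
    rwa [hclosed.closure_eq] at this
  have hne : S.Nonempty := by
    refine ⟨⟨μ.prod ν, inferInstance⟩, (memS _).2 ⟨Subtype.property _, ?_, ?_⟩⟩
    · simp [Measure.map_fst_prod]
    · simp [Measure.map_snd_prod]
  obtain ⟨π, hπ, hmin⟩ := (lCost_lsc (d := d)).lowerSemicontinuousOn S |>.exists_isMinOn hne hcomp
  have hc := (memS π).1 hπ
  refine ⟨π, hc, ?_⟩
  unfold W2sq
  have hl : IsLeast (tCost '' Coupling μ ν) (tCost (π : Measure (Euc d × Euc d))) := by
    refine ⟨⟨_, hc, rfl⟩, ?_⟩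
    rintro _ ⟨π', hπ', rfl⟩
    rw [tCost_eq, tCost_eq]
    refine ENNReal.toReal_mono (lCost_ne_top hμ hν hπ') ?_
    exact hmin ((memS ⟨π', hπ'.1⟩).2 hπ')
  exact hl.csInf_eq.symm

lemma Gamma_nonempty {d : ℕ} {ν μ1 μ2 : Measure (Euc d)}
    (hν : ν ∈ (P2 : Set (Measure (Euc d))))
    (h1 : μ1 ∈ (P2 : Set (Measure (Euc d)))) (h2 : μ2 ∈ (P2 : Set (Measure (Euc d)))) :
    (Gamma ν μ1 μ2).Nonempty := by
  obtain ⟨π1, hπ1⟩ := exists_opt hν h1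
  obtain ⟨π2, hπ2⟩ := exists_opt hν h2
  have := hν.1
  have := hπ1.1.1
  have := hπ2.1.1
  have e1 : ν ⊗ₘ π1.condKernel = π1 := by
    have := π1.disintegrate π1.condKernel
    rwa [show π1.fst = ν from hπ1.1.2.1] at this
  have e2 : ν ⊗ₘ π2.condKernel = π2 := by
    have := π2.disintegrate π2.condKernel
    rwa [show π2.fst = ν from hπ2.1.2.1] at this
  refine ⟨ν ⊗ₘ (π1.condKernel ×ₖ π2.condKernel), inferInstance, ?_, ?_⟩
  · have : (ν ⊗ₘ (π1.condKernel ×ₖ π2.condKernel)).map (fun p => (p.1, p.2.1)) = π1 := by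
      have := Measure.compProd_map (μ := ν) (κ := π1.condKernel ×ₖ π2.condKernel)
        (f := Prod.fst) measurable_fst
      rw [← Kernel.fst_eq, Kernel.fst_prod, e1] at this
      exact this.symm
    rwa [this]
  · have : (ν ⊗ₘ (π1.condKernel ×ₖ π2.condKernel)).map (fun p => (p.1, p.2.2)) = π2 := by
      have := Measure.compProd_map (μ := ν) (κ := π1.condKernel ×ₖ π2.condKernel)
        (f := Prod.snd) measurable_snd
      rw [← Kernel.snd_eq, Kernel.snd_prod, e2] at this
      exact this.symm
    rwa [this]

lemma pivotCost_nonneg {d : ℕ} (ρ : Measure (Euc d × Euc d × Euc d)) : 0 ≤ pivotCost ρ :=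
  integral_nonneg fun _ => by positivity

lemma W2sq_le_PSsq {d : ℕ} (θ : Euc d) (μ1 μ2 : Measure (Euc d))
    (h1 : μ1 ∈ (P2 : Set (Measure (Euc d)))) (h2 : μ2 ∈ (P2 : Set (Measure (Euc d)))) :
    W2sq μ1 μ2 ≤ PSsq θ μ1 μ2 := by
  unfold PSsq Wnusq
  apply le_csInf ((Gamma_nonempty (pivotMiddle_mem θ μ1 μ2 h1 h2) h1 h2).image _)
  rintro _ ⟨ρ, ⟨hρ, ha, hb⟩, rfl⟩
  have hbd : BddBelow (tCost '' Coupling μ1 μ2) :=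
    ⟨0, by rintro _ ⟨π, -, rfl⟩; exact integral_nonneg fun _ => by positivity⟩
  refine csInf_le hbd ⟨ρ.map Prod.snd, ⟨Measure.isProbabilityMeasure_map (by fun_prop), ?_, ?_⟩, ?_⟩
  · have := ha.1.2.2
    rw [Measure.map_map (by fun_prop) (by fun_prop)] at this ⊢
    exact this
  · have := hb.1.2.2
    rw [Measure.map_map (by fun_prop) (by fun_prop)] at this ⊢
    exact this
  · unfold tCost pivotCost
    rw [integral_map (by fun_prop)]
    exact (by fun_prop : Measurable fun p : Euc d × Euc d => ‖p.1 - p.2‖ ^ 2).aestronglyMeasurable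

lemma PSsq_symm_le {d : ℕ} (ν μ1 μ2 : Measure (Euc d)) :
    pivotCost '' Gamma ν μ1 μ2 ⊆ pivotCost '' Gamma ν μ2 μ1 := by
  rintro _ ⟨ρ, ⟨hρ, ha, hb⟩, rfl⟩
  refine ⟨ρ.map (fun p => (p.1, p.2.2, p.2.1)),
    ⟨Measure.isProbabilityMeasure_map (by fun_prop), ?_, ?_⟩, ?_⟩
  · rw [Measure.map_map (by fun_prop) (by fun_prop)]
    exact hb
  · rw [Measure.map_map (by fun_prop) (by fun_prop)]
    exact ha
  · unfold pivotCost
    rw [integral_map (by fun_prop)]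
    · simp only [norm_sub_rev]
    · exact (by fun_prop : Measurable
        fun p : Euc d × Euc d × Euc d => ‖p.2.1 - p.2.2‖ ^ 2).aestronglyMeasurable

lemma PSsq_symm {d : ℕ} (θ : Euc d) (μ1 μ2 : Measure (Euc d)) :
    PSsq θ μ1 μ2 = PSsq θ μ2 μ1 := by
  have : pivotMiddle θ μ1 μ2 = pivotMiddle θ μ2 μ1 := by
    unfold pivotMiddle
    congr 1
    ext t
    rw [add_comm]
  unfold PSsq Wnusq
  rw [this]
  congr 1
  exact Set.Subset.antisymm (PSsq_symm_le _ _ _) (PSsq_symm_le _ _ _)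

lemma PSsq_self {d : ℕ} (θ : Euc d) (μ : Measure (Euc d))
    (h : μ ∈ (P2 : Set (Measure (Euc d)))) : PSsq θ μ μ = 0 := by
  obtain ⟨π, hπ⟩ := exists_opt (pivotMiddle_mem θ μ μ h h) h
  have := hπ.1.1
  unfold PSsq Wnusq
  refine IsLeast.csInf_eq ⟨⟨π.map (fun p => (p.1, p.2, p.2)),
    ⟨Measure.isProbabilityMeasure_map (by fun_prop), ?_, ?_⟩, ?_⟩, ?_⟩
  · rw [Measure.map_map (by fun_prop) (by fun_prop)]
    exact (Measure.map_id (μ := π)).symm ▸ hπ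
  · rw [Measure.map_map (by fun_prop) (by fun_prop)]
    exact (Measure.map_id (μ := π)).symm ▸ hπ
  · unfold pivotCost
    rw [integral_map (by fun_prop)]
    · simp
    · exact (by fun_prop : Measurable
        fun p : Euc d × Euc d × Euc d => ‖p.2.1 - p.2.2‖ ^ 2).aestronglyMeasurable
  · rintro _ ⟨ρ, -, rfl⟩
    exact pivotCost_nonneg ρ

lemma eq_of_W2sq {d : ℕ} {μ ν : Measure (Euc d)}
    (hμ : μ ∈ (P2 : Set (Measure (Euc d)))) (hν : ν ∈ (P2 : Set (Measure (Euc d))))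
    (h : W2sq μ ν ≤ 0) : μ = ν := by
  obtain ⟨π, hπ, hc⟩ := exists_opt hμ hν
  have h0 : lCost π = 0 := by
    rw [← hc, tCost_eq] at h
    rcases (ENNReal.toReal_eq_zero_iff _).1 (le_antisymm h ENNReal.toReal_nonneg) with h | h
    · exact h
    · exact absurd h (lCost_ne_top hμ hν hπ)
  unfold lCost at h0
  rw [lintegral_eq_zero_iff (by fun_prop)] at h0
  rw [← hπ.2.1, ← hπ.2.2]
  apply Measure.map_congr
  filter_upwards [h0] with p hp
  have h3 : ‖p.1 - p.2‖ ^ 2 ≤ 0 := ENNReal.ofReal_eq_zero.1 hp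
  have h4 : ‖p.1 - p.2‖ = 0 := by nlinarith [norm_nonneg (p.1 - p.2)]
  exact sub_eq_zero.1 (norm_eq_zero.1 h4)

/-- semi-metric properties of the Pivot Sliced discrepancy `PS_θ`:
separation, symmetry, and upper bound of `W₂`. -/
theorem PS_semi_metric {d : ℕ} (θ : Euc d) (hθ : ‖θ‖ = 1) (μ1 μ2 : Measure (Euc d))
    (h1 : μ1 ∈ (P2 : Set (Measure (Euc d)))) (h2 : μ2 ∈ (P2 : Set (Measure (Euc d)))) :
    (PS θ μ1 μ2 = 0 ↔ μ1 = μ2) ∧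
    PS θ μ1 μ2 = PS θ μ2 μ1 ∧
    W2 μ1 μ2 ≤ PS θ μ1 μ2 := by
  have hle := W2sq_le_PSsq θ μ1 μ2 h1 h2
  refine ⟨⟨fun h => ?_, ?_⟩, ?_, ?_⟩
  · exact eq_of_W2sq h1 h2 (hle.trans (Real.sqrt_eq_zero'.1 h))
  · rintro rfl
    unfold PS
    rw [PSsq_self θ μ1 h1, Real.sqrt_zero]
  · unfold PS
    rw [PSsq_symm]
  · exact Real.sqrt_le_sqrt hle

end
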